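/- Let a ∈ (0,1) and s ∈ ℝ. For every ε > 0 there exists a constant C_ε > 0 such that for every δ ∈ (0,1) and every Schwartz function f on ℝ² one has ‖ψ(t/δ) f‖_{X^{1/2}_s} ≤ C_ε δ^{−ε} ‖f‖_{X^{1/2}_s}, where ψ(t/δ) f denotes the function (x,t) ↦ ψ(t/δ) f(x,t). -/

import Mathlib

/-!
On the Fourier side, multiplication by `ψ (t / δ)` is, for each frequency `ξ`, a convolution in `λ`
with an `L¹`-normalized dilation of the Fourier transform of `ψ`. The latter is dominated by an
integrable radially decreasing kernel, so it is enough to bound the convolution with such a kernel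
`κ` by a multiple of `∫ κ`, a quantity which dilations preserve. The resulting estimate is uniform
in `δ`: the factor `δ ^ (-ε)` is not needed.

Decompose the input into shells where the modulation `|λ - ω(ξ)|` is comparable to `2 ^ k`, and the
output into shells where it is comparable to `2 ^ j`. For `j ≤ k + 2`, Schur's test bounds the
convolution by `∫ κ`, and `∑_{j ≤ k + 2} 2 ^ (j / 2) ≲ 2 ^ (k / 2)`. For `j ≥ k + 3` the two shells
are at distance at least `2 ^ j / 4`, where `κ ≤ κ (2 ^ j / 4)`, and Schur's test gives a bound
`≲ 2 ^ ((j + k) / 2) κ (2 ^ j / 4)`. Multiplied by `2 ^ (j / 2)` and summed over `j`, this is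
`2 ^ (k / 2) ∑ⱼ 2 ^ j κ (2 ^ j / 4) ≲ 2 ^ (k / 2) ∫ κ`, because `κ` is radially decreasing.

The estimates are carried out in `ℝ≥0∞`. They yield the inequality between real norms because
the norm of a Schwartz function is finite; otherwise the right-hand side could be the junk value
`0`.
-/

open MeasureTheory Complex

noncomputable section

/-- The dispersive symbol `ω(ξ) = ξ |ξ|^(1+a)`. -/
def disp (a ξ : ℝ) : ℝ := ξ * |ξ| ^ (1 + a)

/-- Fourier transform on `ℝ`, convention `f̂(ξ) = ∫ e^{ixξ} f(x) dx`. -/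
def FT1 (f : ℝ → ℂ) (ξ : ℝ) : ℂ :=
  ∫ x : ℝ, Complex.exp (Complex.I * ((x * ξ : ℝ) : ℂ)) * f x

/-- Spacetime Fourier transform, convention `f̂(ξ,λ) = ∫ e^{i(xξ+tλ)} f(x,t) dx dt`,
for `f : ℝ × ℝ → ℂ` with first coordinate `x` (space) and second `t` (time). -/
def FT2 (f : ℝ × ℝ → ℂ) (ξ lam : ℝ) : ℂ :=
  ∫ p : ℝ × ℝ, Complex.exp (Complex.I * ((p.1 * ξ + p.2 * lam : ℝ) : ℂ)) * f p

/-- The dyadic cutoffs `χ_j`: `χ_0 = χ₀` and `χ_j(z) = χ(2^{-j} z)` for `j ≥ 1`. -/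
def chiJ (χ₀ χ : ℝ → ℝ) (j : ℕ) (z : ℝ) : ℝ :=
  if j = 0 then χ₀ z else χ ((2 : ℝ) ^ (-(j : ℝ)) * z)

/-- Hypotheses on the fixed dyadic cutoffs. -/
structure DyadicCutoffs (χ₀ χ : ℝ → ℝ) : Prop where
  smooth0 : ContDiff ℝ (⊤ : ℕ∞) χ₀
  even0 : ∀ z, χ₀ (-z) = χ₀ z
  mem0 : ∀ z, χ₀ z ∈ Set.Icc (0 : ℝ) 1
  supp0 : ∀ z, 2 < |z| → χ₀ z = 0
  one0 : ∀ z, |z| ≤ 1 → χ₀ z = 1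
  smooth1 : ContDiff ℝ (⊤ : ℕ∞) χ
  even1 : ∀ z, χ (-z) = χ z
  mem1 : ∀ z, χ z ∈ Set.Icc (0 : ℝ) 1
  supp1 : ∀ z, χ z ≠ 0 → 1 / 2 < |z| ∧ |z| < 2
  partition : ∀ z, ∑' j : ℕ, chiJ χ₀ χ j z = 1

/-- A smooth time cutoff supported in `[-1,1]`. -/
structure TimeCutoff (ψ : ℝ → ℝ) : Prop where
  smooth : ContDiff ℝ (⊤ : ℕ∞) ψ
  supp : ∀ t, ψ t ≠ 0 → |t| ≤ 1

/-- The norm `‖f‖_{X^b_s}`. -/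
def Xnorm (a : ℝ) (χ₀ χ : ℝ → ℝ) (b s : ℝ) (f : ℝ × ℝ → ℂ) : ℝ :=
  ∑' j : ℕ, (2 : ℝ) ^ ((j : ℝ) * b) *
    (∫ p : ℝ × ℝ, chiJ χ₀ χ j (p.2 - disp a p.1) * (1 + |p.1|) ^ (2 * s) *
      ‖FT2 f p.1 p.2‖ ^ 2) ^ ((1 : ℝ) / 2)

/-- The norm `‖f‖_{Y^b_{s₀,s₁}} = ‖x·f‖_{X^b_{s₀}} + ‖t·f‖_{X^b_{s₁}}`. -/
def Ynorm (a : ℝ) (χ₀ χ : ℝ → ℝ) (b s₀ s₁ : ℝ) (f : ℝ × ℝ → ℂ) : ℝ :=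
  Xnorm a χ₀ χ b s₀ (fun p => (p.1 : ℂ) * f p) +
    Xnorm a χ₀ χ b s₁ (fun p => (p.2 : ℂ) * f p)

/-- The norm `‖f‖_{Z^b_s} = ‖f‖_{X^b_s} + ‖f‖_{Y^b_{s-2s*,s}}`, where `s* = 1/2 + a/2`. -/
def Znorm (a : ℝ) (χ₀ χ : ℝ → ℝ) (b s : ℝ) (f : ℝ × ℝ → ℂ) : ℝ :=
  Xnorm a χ₀ χ b s f + Ynorm a χ₀ χ b (s - 2 * (1 / 2 + a / 2)) s f

/-- The norm `‖f‖_{X̃^b_s}`. -/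
def XtildeNorm (a b s : ℝ) (f : ℝ × ℝ → ℂ) : ℝ :=
  (∫ p : ℝ × ℝ, (1 + |p.2 - disp a p.1|) ^ (2 * b) * (1 + |p.1|) ^ (2 * s) *
    ‖FT2 f p.1 p.2‖ ^ 2) ^ ((1 : ℝ) / 2)

/-- The Sobolev norm `‖g‖_{H^s} = (∫ (1+|ξ|)^{2s} |ĝ(ξ)|² dξ)^{1/2}`. -/
def Hnorm (s : ℝ) (g : ℝ → ℂ) : ℝ :=
  (∫ ξ : ℝ, (1 + |ξ|) ^ (2 * s) * ‖FT1 g ξ‖ ^ 2) ^ ((1 : ℝ) / 2)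

/-- The weighted norm `‖g‖_{F^s} = ‖g‖_{H^s} + ‖x·g‖_{H^{s-2s*}}` (here `sstar = s*`). -/
def Fnorm (sstar s : ℝ) (g : ℝ → ℂ) : ℝ :=
  Hnorm s g + Hnorm (s - 2 * sstar) (fun x => (x : ℂ) * g x)

/-- The `L^p` norm `(∫ ‖f‖^p)^{1/p}`. -/
def Lpnorm {α : Type*} [MeasureSpace α] {E : Type*} [NormedAddCommGroup E]
    (p : ℝ) (f : α → E) : ℝ :=
  (∫ x, ‖f x‖ ^ p) ^ (1 / p)

/-- The linear propagator `W(t)`, defined via Fourier inversion so that its Fourier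
transform in `x` is `e^{itω(ξ)} û₀(ξ)`. -/
def Wgrp (a : ℝ) (u₀ : ℝ → ℂ) (t x : ℝ) : ℂ :=
  ((1 / (2 * Real.pi) : ℝ) : ℂ) *
    ∫ ξ : ℝ, Complex.exp (-(Complex.I * ((x * ξ : ℝ) : ℂ))) *
      (Complex.exp (Complex.I * ((t * disp a ξ : ℝ) : ℂ)) * FT1 u₀ ξ)

/-- The Fourier multiplier `D^σ` with symbol `|ξ|^σ`, via Fourier inversion. -/
def Dop (σ : ℝ) (g : ℝ → ℂ) (x : ℝ) : ℂ :=
  ((1 / (2 * Real.pi) : ℝ) : ℂ) *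
    ∫ ξ : ℝ, Complex.exp (-(Complex.I * ((x * ξ : ℝ) : ℂ))) *
      (((|ξ| ^ σ : ℝ) : ℂ) * FT1 g ξ)

open scoped ENNReal FourierTransform SchwartzMap

/-! ### Inequalities in `L²` -/

lemma eLpNorm_two_eq_rpow_lintegral {α E : Type*} [MeasurableSpace α] [ENorm E] (μ : Measure α)
    (f : α → E) : eLpNorm f 2 μ = (∫⁻ x, ‖f x‖ₑ ^ 2 ∂μ) ^ (1 / 2 : ℝ) := by
  simp [eLpNorm_eq_lintegral_rpow_enorm_toReal]

lemma rpow_half_sq (x : ℝ≥0∞) : (x ^ 2) ^ (1 / 2 : ℝ) = x := by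
  rw [← ENNReal.rpow_two, ← ENNReal.rpow_mul]
  norm_num

lemma eLpNorm_two_le_mul_of_lintegral_sq_le {α β E F : Type*} [MeasurableSpace α]
    [MeasurableSpace β] [ENorm E] [ENorm F] {μ : Measure α} {ν : Measure β} {f : α → E}
    {g : β → F} {C : ℝ≥0∞} (h : ∫⁻ x, ‖f x‖ₑ ^ 2 ∂μ ≤ C ^ 2 * ∫⁻ y, ‖g y‖ₑ ^ 2 ∂ν) :
    eLpNorm f 2 μ ≤ C * eLpNorm g 2 ν := by
  rw [eLpNorm_two_eq_rpow_lintegral, eLpNorm_two_eq_rpow_lintegral, ← rpow_half_sq C,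
    ← ENNReal.mul_rpow_of_nonneg _ _ (by norm_num)]
  gcongr

lemma sq_lintegral_mul_le {α : Type*} [MeasurableSpace α] {μ : Measure α} {k g : α → ℝ≥0∞}
    (hk : AEMeasurable k μ) (hg : AEMeasurable g μ) :
    (∫⁻ x, k x * g x ∂μ) ^ 2 ≤ (∫⁻ x, k x ∂μ) * ∫⁻ x, k x * g x ^ 2 ∂μ := by
  have holder := ENNReal.lintegral_mul_norm_pow_le hk (hk.mul (hg.pow_const 2))
    (p := 1 / 2) (q := 1 / 2) (by norm_num) (by norm_num) (by norm_num)
  have split (x : α) : k x ^ (1 / 2 : ℝ) * (k x * g x ^ 2) ^ (1 / 2 : ℝ) = k x * g x := by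
    rw [← ENNReal.mul_rpow_of_nonneg _ _ (by norm_num), ← mul_assoc, ← sq, ← mul_pow, rpow_half_sq]
  simp only [Pi.mul_apply, split] at holder
  rw [← ENNReal.mul_rpow_of_nonneg _ _ (by norm_num)] at holder
  calc (∫⁻ x, k x * g x ∂μ) ^ 2
      ≤ (((∫⁻ x, k x ∂μ) * ∫⁻ x, k x * g x ^ 2 ∂μ) ^ (1 / 2 : ℝ)) ^ 2 := by gcongr
    _ = (∫⁻ x, k x ∂μ) * ∫⁻ x, k x * g x ^ 2 ∂μ := by
      rw [← ENNReal.rpow_two, ← ENNReal.rpow_mul]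
      norm_num

lemma schur_test_lintegral_sq_le {α β : Type*} [MeasurableSpace α] [MeasurableSpace β]
    {μ : Measure α} {ν : Measure β} [SFinite μ] [SFinite ν] {K : α → β → ℝ≥0∞} {g : β → ℝ≥0∞}
    {P Q : ℝ≥0∞} (hK : Measurable (Function.uncurry K)) (hg : Measurable g)
    (hP : ∀ᵐ x ∂μ, ∫⁻ y, K x y ∂ν ≤ P) (hQ : ∀ᵐ y ∂ν, ∫⁻ x, K x y ∂μ ≤ Q) :
    ∫⁻ x, (∫⁻ y, K x y * g y ∂ν) ^ 2 ∂μ ≤ P * Q * ∫⁻ y, g y ^ 2 ∂ν := by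
  have hKg : Measurable (Function.uncurry fun x y => K x y * g y ^ 2) :=
    hK.mul ((hg.comp measurable_snd).pow_const 2)
  calc ∫⁻ x, (∫⁻ y, K x y * g y ∂ν) ^ 2 ∂μ
      ≤ ∫⁻ x, P * ∫⁻ y, K x y * g y ^ 2 ∂ν ∂μ := by
        refine lintegral_mono_ae (hP.mono fun x hx => ?_)
        exact (sq_lintegral_mul_le hK.of_uncurry_left.aemeasurable hg.aemeasurable).trans
          (by gcongr)
    _ = P * ∫⁻ y, (∫⁻ x, K x y ∂μ) * g y ^ 2 ∂ν := by
        rw [lintegral_const_mul _ hKg.lintegral_prod_right,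
          lintegral_lintegral_swap hKg.aemeasurable]
        simp only [lintegral_mul_const _ hK.of_uncurry_right]
    _ ≤ P * ∫⁻ y, Q * g y ^ 2 ∂ν := by
        gcongr 1
        exact lintegral_mono_ae (hQ.mono fun y hy => by gcongr)
    _ = P * Q * ∫⁻ y, g y ^ 2 ∂ν := by
        rw [lintegral_const_mul _ (by fun_prop), mul_assoc]

lemma eLpNorm_tsum_le {α : Type*} [MeasurableSpace α] {μ : Measure α} {p : ℝ≥0∞} (hp : 1 ≤ p)
    (hp_top : p ≠ ∞) {h : ℕ → α → ℝ≥0∞} (hh : ∀ k, Measurable (h k)) :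
    eLpNorm (fun x => ∑' k, h k x) p μ ≤ ∑' k, eLpNorm (h k) p μ := by
  have hp0 : p ≠ 0 := (zero_lt_one.trans_le hp).ne'
  have hpos : 0 < p.toReal := ENNReal.toReal_pos hp0 hp_top
  set S : ℕ → α → ℝ≥0∞ := fun n => ∑ k ∈ Finset.range n, h k with hS
  have S_meas (n : ℕ) : Measurable (S n) := by
    simp only [S]
    fun_prop
  have S_mono : Monotone fun n x => S n x ^ p.toReal := by
    intro m n hmn x
    simp only [hS, Finset.sum_apply]
    gcongr
  have tsum_eq_iSup (x : α) : (∑' k, h k x) ^ p.toReal = ⨆ n, S n x ^ p.toReal := by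
    have lim := (ENNReal.continuous_rpow_const (y := p.toReal)).tendsto _ |>.comp
      (ENNReal.tendsto_nat_tsum fun k => h k x)
    refine tendsto_nhds_unique lim ?_
    simpa only [Function.comp_def, hS, Finset.sum_apply] using
      tendsto_atTop_iSup fun m n hmn => S_mono hmn x
  rw [eLpNorm_eq_lintegral_rpow_enorm_toReal hp0 hp_top, one_div, ENNReal.rpow_inv_le_iff hpos]
  simp only [enorm_eq_self, tsum_eq_iSup]
  rw [lintegral_iSup (fun n => (S_meas n).pow_const _) S_mono]
  refine iSup_le fun n => ?_
  rw [← ENNReal.rpow_inv_le_iff hpos, ← one_div]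
  calc (∫⁻ x, S n x ^ p.toReal ∂μ) ^ (1 / p.toReal) = eLpNorm (S n) p μ := by
        simp only [eLpNorm_eq_lintegral_rpow_enorm_toReal hp0 hp_top, enorm_eq_self]
    _ ≤ ∑ k ∈ Finset.range n, eLpNorm (h k) p μ :=
        eLpNorm_sum_le (fun k _ => (hh k).aestronglyMeasurable) hp
    _ ≤ ∑' k, eLpNorm (h k) p μ := ENNReal.sum_le_tsum _

/-! ### Radially decreasing kernels -/

lemma exists_one_add_norm_pow_mul_norm_le {D E : Type*} [NormedAddCommGroup D]
    [NormedSpace ℝ D] [NormedAddCommGroup E] [NormedSpace ℝ E] (F : 𝓢(D, E)) (k : ℕ) :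
    ∃ C : ℝ, ∀ x, (1 + ‖x‖) ^ k * ‖F x‖ ≤ C :=
  ⟨_, fun x => by
    simpa only [norm_iteratedFDeriv_zero] using
      SchwartzMap.one_add_le_sup_seminorm_apply (𝕜 := ℝ) (m := (k, 0)) le_rfl le_rfl F x⟩

/-- Kernels that are nonincreasing functions of the distance to the origin; in particular they are
even. -/
def RadiallyAntitone (κ : ℝ → ℝ≥0∞) : Prop :=
  ∀ ⦃u v : ℝ⦄, |u| ≤ |v| → κ v ≤ κ u

namespace RadiallyAntitone

variable {κ : ℝ → ℝ≥0∞}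

lemma measurable (hκ : RadiallyAntitone κ) : Measurable κ := by
  have anti : Antitone fun v : ℝ => κ (max v 0) := fun u v huv => hκ <| by
    rw [abs_of_nonneg (le_max_right u 0), abs_of_nonneg (le_max_right v 0)]
    exact max_le_max_right 0 huv
  have factor : κ = (fun v => κ (max v 0)) ∘ fun u => |u| := by
    funext u
    simp only [Function.comp_apply, max_eq_left (abs_nonneg u)]
    exact le_antisymm (hκ (abs_abs u).le) (hκ (abs_abs u).ge)
  rw [factor]
  exact anti.measurable.comp continuous_abs.measurable

/-- Compare `2 ^ j κ (2 ^ j / 4)` with the integral of `κ` over `(2 ^ j / 8, 2 ^ (j + 1) / 8]`. -/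
lemma tsum_two_pow_mul_le (hκ : RadiallyAntitone κ) :
    ∑' j : ℕ, 2 ^ j * κ (2 ^ j / 4) ≤ 8 * ∫⁻ u, κ u := by
  have grid_mono : Monotone fun j : ℕ => (2 : ℝ) ^ j / 8 := fun i j hij => by
    simp only
    gcongr
    norm_num
  set I : ℕ → Set ℝ := fun j => Set.Ioc (2 ^ j / 8) (2 ^ (j + 1) / 8) with hI
  have I_disjoint : Pairwise (Function.onFun Disjoint I) :=
    grid_mono.pairwise_disjoint_on_Ioc_succ
  have term_le (j : ℕ) : 2 ^ j * κ (2 ^ j / 4) ≤ 8 * ∫⁻ u in I j, κ u := by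
    have volume_I : 8 * volume (I j) = 2 ^ j := by
      rw [hI, Real.volume_Ioc, ← ENNReal.ofReal_ofNat 8, ← ENNReal.ofReal_mul (by norm_num),
        show (8 : ℝ) * (2 ^ (j + 1) / 8 - 2 ^ j / 8) = 2 ^ j by ring,
        ENNReal.ofReal_pow (by norm_num), ENNReal.ofReal_ofNat]
    calc 2 ^ j * κ (2 ^ j / 4) = 8 * ∫⁻ _ in I j, κ (2 ^ j / 4) := by
          rw [setLIntegral_const, ← volume_I]
          ring
      _ ≤ 8 * ∫⁻ u in I j, κ u := by
          gcongr 1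
          refine setLIntegral_mono hκ.measurable fun u hu => hκ ?_
          have u_pos : 0 < u := lt_trans (by positivity) hu.1
          rw [abs_of_pos u_pos, abs_of_pos (by positivity)]
          exact hu.2.trans_eq (by ring)
  calc ∑' j : ℕ, 2 ^ j * κ (2 ^ j / 4) ≤ ∑' j, 8 * ∫⁻ u in I j, κ u :=
        ENNReal.tsum_le_tsum term_le
    _ = 8 * ∫⁻ u in ⋃ j, I j, κ u := by
        rw [ENNReal.tsum_mul_left, lintegral_iUnion (fun j => measurableSet_Ioc) I_disjoint]
    _ ≤ 8 * ∫⁻ u, κ u := by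
        gcongr 1
        exact setLIntegral_le_lintegral _ _

end RadiallyAntitone

lemma ofReal_abs_mul_lintegral_comp_mul_left {b : ℝ} (hb : b ≠ 0) (f : ℝ → ℝ≥0∞) :
    ENNReal.ofReal |b| * ∫⁻ u, f (b * u) = ∫⁻ v, f v := by
  rw [← (measurableEmbedding_mulLeft₀ hb).lintegral_map, Real.map_volume_mul_left hb,
    lintegral_smul_measure, smul_eq_mul, ← mul_assoc, ← ENNReal.ofReal_mul (abs_nonneg b),
    ← abs_mul, mul_inv_cancel₀ hb, abs_one, ENNReal.ofReal_one, one_mul]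

/-- The dilation of a kernel by the factor `b`, normalized so as to preserve its integral. -/
def dilation (b : ℝ) (κ : ℝ → ℝ≥0∞) (u : ℝ) : ℝ≥0∞ :=
  ENNReal.ofReal |b| * κ (b * u)

lemma lintegral_dilation {b : ℝ} (hb : b ≠ 0) (κ : ℝ → ℝ≥0∞) :
    ∫⁻ u, dilation b κ u = ∫⁻ u, κ u := by
  simp only [dilation]
  rw [lintegral_const_mul' _ _ ENNReal.ofReal_ne_top,
    ofReal_abs_mul_lintegral_comp_mul_left hb]

lemma RadiallyAntitone.dilation {κ : ℝ → ℝ≥0∞} (hκ : RadiallyAntitone κ) (b : ℝ) :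
    RadiallyAntitone (dilation b κ) := fun u v huv => by
  have : |b * u| ≤ |b * v| := by
    rw [abs_mul, abs_mul]
    gcongr
  exact mul_le_mul_right (hκ this) _

lemma exists_radiallyAntitone_majorant {E : Type*} [NormedAddCommGroup E] [NormedSpace ℝ E]
    (g : 𝓢(ℝ, E)) :
    ∃ κ : ℝ → ℝ≥0∞, RadiallyAntitone κ ∧ ∫⁻ u, κ u ≠ ∞ ∧ ∀ v, ‖g v‖ₑ ≤ κ v := by
  obtain ⟨C, hC⟩ := exists_one_add_norm_pow_mul_norm_le g 2
  have C_nonneg : 0 ≤ C := le_trans (by positivity) (hC 0)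
  refine ⟨fun v => ENNReal.ofReal (C * (1 + ‖v‖) ^ (-2 : ℝ)), fun u v huv => ?_, ?_, fun v => ?_⟩
  · refine ENNReal.ofReal_le_ofReal (mul_le_mul_of_nonneg_left ?_ C_nonneg)
    exact Real.rpow_le_rpow_of_nonpos (by positivity) (by gcongr; exact huv) (by norm_num)
  · have decay : Integrable fun v : ℝ => (1 + ‖v‖) ^ (-2 : ℝ) :=
      integrable_one_add_norm (by rw [Module.finrank_self]; norm_num)
    exact (decay.const_mul C).lintegral_lt_top.ne
  · simp only
    rw [← ofReal_norm, Real.rpow_neg (by positivity), Real.rpow_two, ← div_eq_mul_inv]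
    exact ENNReal.ofReal_le_ofReal ((le_div_iff₀' (by positivity)).mpr (hC v))

/-! ### Dyadic shells -/

/-- The properties of the dyadic cutoffs on which the estimates rest: a countable measurable
partition of unity of the line whose `j`-th piece lives at distance comparable to `2 ^ j` from the
origin, at most `2` if `j = 0`. -/
structure IsDyadicPartition (c : ℕ → ℝ → ℝ≥0∞) : Prop where
  measurable : ∀ j, Measurable (c j)
  abs_le : ∀ {j z}, c j z ≠ 0 → |z| ≤ 2 ^ (j + 1)
  le_abs : ∀ {j z}, 1 ≤ j → c j z ≠ 0 → 2 ^ j / 2 ≤ |z|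
  tsum_eq_one : ∀ z, ∑' j, c j z = 1

/-- Lebesgue measure localized by the cutoff `c` around the point `o`. -/
def shellMeasure (c : ℝ → ℝ≥0∞) (o : ℝ) : Measure ℝ :=
  volume.withDensity fun l => c (l - o)

instance (c : ℝ → ℝ≥0∞) (o : ℝ) : SFinite (shellMeasure c o) := by
  unfold shellMeasure
  infer_instance

lemma ae_shellMeasure {c : ℝ → ℝ≥0∞} (hc : Measurable c) (o : ℝ) {p : ℝ → Prop}
    (hp : ∀ z, c z ≠ 0 → p z) : ∀ᵐ l ∂shellMeasure c o, p (l - o) := by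
  rw [shellMeasure, ae_withDensity_iff (by fun_prop)]
  exact .of_forall fun l => hp (l - o)

namespace IsDyadicPartition

variable {c : ℕ → ℝ → ℝ≥0∞}

lemma le_one (hc : IsDyadicPartition c) (j : ℕ) (z : ℝ) : c j z ≤ 1 :=
  hc.tsum_eq_one z ▸ ENNReal.le_tsum j

lemma shellMeasure_le_volume (hc : IsDyadicPartition c) (j : ℕ) (o : ℝ) :
    shellMeasure (c j) o ≤ volume :=
  (withDensity_mono (.of_forall fun l => hc.le_one j (l - o))).trans_eq withDensity_one

lemma shellMeasure_univ_le (hc : IsDyadicPartition c) (j : ℕ) (o : ℝ) :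
    shellMeasure (c j) o Set.univ ≤ 2 ^ (j + 2) := by
  have support_ball : ∀ᵐ l ∂shellMeasure (c j) o, l ∈ Metric.closedBall o (2 ^ (j + 1)) := by
    simpa only [Metric.mem_closedBall, Real.dist_eq] using
      ae_shellMeasure (hc.measurable j) o fun z hz => hc.abs_le hz
  calc shellMeasure (c j) o Set.univ
      ≤ shellMeasure (c j) o (Metric.closedBall o (2 ^ (j + 1))) :=
        measure_mono_ae (support_ball.mono fun l hl _ => hl)
    _ ≤ volume (Metric.closedBall o ((2 : ℝ) ^ (j + 1))) := hc.shellMeasure_le_volume j o _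
    _ = 2 ^ (j + 2) := by
        rw [Real.volume_closedBall, ← pow_succ', ENNReal.ofReal_pow (by norm_num),
          ENNReal.ofReal_ofNat]

end IsDyadicPartition

/-- The bound obtained from Schur's test for convolution with `κ`, from the shell of radius `2 ^ k`
to the shell of radius `2 ^ j`. -/
def shellGain (κ : ℝ → ℝ≥0∞) (j k : ℕ) : ℝ≥0∞ :=
  if j < k + 3 then ∫⁻ u, κ u else 4 * κ (2 ^ j / 4) * 2 ^ (((j : ℝ) + k) / 2)

section Convolution

variable {c : ℕ → ℝ → ℝ≥0∞} {κ g : ℝ → ℝ≥0∞}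

lemma lintegral_sq_conv_shellMeasure_le (hc : IsDyadicPartition c) (hκ : Measurable κ)
    (hg : Measurable g) (o : ℝ) (j k : ℕ) :
    ∫⁻ l, (∫⁻ m, κ (l - m) * g m ∂shellMeasure (c k) o) ^ 2 ∂shellMeasure (c j) o ≤
      (∫⁻ u, κ u) ^ 2 * ∫⁻ m, g m ^ 2 ∂shellMeasure (c k) o := by
  rw [sq (∫⁻ u, κ u)]
  refine schur_test_lintegral_sq_le (by fun_prop) hg (.of_forall fun l => ?_)
    (.of_forall fun m => ?_)
  · calc ∫⁻ m, κ (l - m) ∂shellMeasure (c k) o ≤ ∫⁻ m, κ (l - m) :=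
          lintegral_mono' (hc.shellMeasure_le_volume k o) le_rfl
      _ = ∫⁻ u, κ u := lintegral_sub_left_eq_self κ l
  · calc ∫⁻ l, κ (l - m) ∂shellMeasure (c j) o ≤ ∫⁻ l, κ (l - m) :=
          lintegral_mono' (hc.shellMeasure_le_volume j o) le_rfl
      _ = ∫⁻ u, κ u := lintegral_sub_right_eq_self κ m

lemma two_pow_div_four_le_abs_sub {j k : ℕ} (hjk : k + 3 ≤ j) {x y : ℝ} (hx : 2 ^ j / 2 ≤ |x|)
    (hy : |y| ≤ 2 ^ (k + 1)) : 2 ^ j / 4 ≤ |x - y| := by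
  have : (2 : ℝ) ^ (k + 3) ≤ 2 ^ j := pow_le_pow_right₀ one_le_two hjk
  have : (2 : ℝ) ^ (k + 3) = 4 * 2 ^ (k + 1) := by ring
  linarith [abs_sub_abs_le_abs_sub x y]

lemma lintegral_sq_conv_shellMeasure_le_of_separated (hc : IsDyadicPartition c)
    (hκ : RadiallyAntitone κ) (hg : Measurable g) (o : ℝ) {j k : ℕ} (hjk : k + 3 ≤ j) :
    ∫⁻ l, (∫⁻ m, κ (l - m) * g m ∂shellMeasure (c k) o) ^ 2 ∂shellMeasure (c j) o ≤
      (4 * κ (2 ^ j / 4) * 2 ^ (((j : ℝ) + k) / 2)) ^ 2 *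
        ∫⁻ m, g m ^ 2 ∂shellMeasure (c k) o := by
  set M := κ (2 ^ j / 4)
  have in_j := ae_shellMeasure (hc.measurable j) o fun z hz => hc.le_abs (by lia) hz
  have in_k := ae_shellMeasure (hc.measurable k) o fun z hz => hc.abs_le hz
  have far {l m : ℝ} (hl : 2 ^ j / 2 ≤ |l - o|) (hm : |m - o| ≤ 2 ^ (k + 1)) : κ (l - m) ≤ M := by
    refine hκ ?_
    rw [abs_of_pos (by positivity), ← sub_sub_sub_cancel_right l m o]
    exact two_pow_div_four_le_abs_sub hjk hl hm
  have mass_le {ρ : Measure ℝ} {n : ℕ} (hρ : ρ Set.univ ≤ 2 ^ (n + 2)) {f : ℝ → ℝ≥0∞}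
      (hf : ∀ᵐ x ∂ρ, f x ≤ M) : ∫⁻ x, f x ∂ρ ≤ M * 2 ^ (n + 2) :=
    (lintegral_mono_ae hf).trans (by rw [lintegral_const]; gcongr)
  have gain_sq : M * 2 ^ (k + 2) * (M * 2 ^ (j + 2)) =
      (4 * M * 2 ^ (((j : ℝ) + k) / 2)) ^ 2 := by
    have : ((2 : ℝ≥0∞) ^ (((j : ℝ) + k) / 2)) ^ 2 = 2 ^ j * 2 ^ k := by
      rw [← ENNReal.rpow_two, ← ENNReal.rpow_mul, div_mul_cancel₀ _ two_ne_zero, ← pow_add,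
        ← ENNReal.rpow_natCast, Nat.cast_add]
    rw [mul_pow, this]
    ring
  rw [← gain_sq]
  exact schur_test_lintegral_sq_le (by have := hκ.measurable; fun_prop) hg
    (in_j.mono fun l hl => mass_le (hc.shellMeasure_univ_le k o) (in_k.mono fun m hm => far hl hm))
    (in_k.mono fun m hm => mass_le (hc.shellMeasure_univ_le j o) (in_j.mono fun l hl => far hl hm))

lemma lintegral_sq_conv_shellMeasure_le_shellGain (hc : IsDyadicPartition c)
    (hκ : RadiallyAntitone κ) (hg : Measurable g) (o : ℝ) (j k : ℕ) :
    ∫⁻ l, (∫⁻ m, κ (l - m) * g m ∂shellMeasure (c k) o) ^ 2 ∂shellMeasure (c j) o ≤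
      shellGain κ j k ^ 2 * ∫⁻ m, g m ^ 2 ∂shellMeasure (c k) o := by
  unfold shellGain
  split_ifs with hjk
  · exact lintegral_sq_conv_shellMeasure_le hc hκ.measurable hg o j k
  · exact lintegral_sq_conv_shellMeasure_le_of_separated hc hκ hg o (not_lt.mp hjk)

end Convolution

/-! ### The modulation norm -/

lemma sum_range_succ_pow_le {r : ℝ≥0∞} (hr0 : r ≠ 0) (hr : r ≠ ∞) (n : ℕ) :
    ∑ j ∈ Finset.range (n + 1), r ^ j ≤ r ^ n * (1 - r⁻¹)⁻¹ := by
  rw [← Finset.sum_range_reflect, ← ENNReal.tsum_geometric, ← ENNReal.tsum_mul_left]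
  refine le_of_eq_of_le (Finset.sum_congr rfl fun j hj => ?_)
    (ENNReal.sum_le_tsum (Finset.range (n + 1)))
  have hj : j ≤ n := Finset.mem_range_succ_iff.mp hj
  calc r ^ (n + 1 - 1 - j) = r ^ (n - j) * (r * r⁻¹) ^ j := by
        rw [ENNReal.mul_inv_cancel hr0 hr, one_pow, mul_one, Nat.add_sub_cancel]
    _ = r ^ n * r⁻¹ ^ j := by rw [mul_pow, ← mul_assoc, ← pow_add, Nat.sub_add_cancel hj]

lemma two_rpow_mul_shellGain_le {κ : ℝ → ℝ≥0∞} {b : ℝ} (hb : b ≤ 1 / 2) (j k : ℕ) :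
    2 ^ (j * b) * shellGain κ j k ≤
      (if j < k + 3 then (2 ^ b) ^ j else 0) * (∫⁻ u, κ u) +
        4 * 2 ^ (k * b) * (2 ^ j * κ (2 ^ j / 4)) := by
  unfold shellGain
  split_ifs with hjk
  · rw [mul_comm (j : ℝ), ENNReal.rpow_mul, ENNReal.rpow_natCast]
    exact le_self_add
  · have exponent_le : (j : ℝ) * b + (j + k) / 2 ≤ k * b + j := by
      have : (k : ℝ) ≤ j := mod_cast (by lia : k ≤ j)
      nlinarith
    calc 2 ^ (j * b) * (4 * κ (2 ^ j / 4) * 2 ^ (((j : ℝ) + k) / 2))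
        = 4 * κ (2 ^ j / 4) * 2 ^ ((j : ℝ) * b + (j + k) / 2) := by
          rw [ENNReal.rpow_add _ _ two_ne_zero ENNReal.ofNat_ne_top]
          ring
      _ ≤ 4 * κ (2 ^ j / 4) * 2 ^ ((k : ℝ) * b + j) := by
          gcongr
          norm_num
      _ = 0 * (∫⁻ u, κ u) + 4 * 2 ^ (k * b) * (2 ^ j * κ (2 ^ j / 4)) := by
          rw [ENNReal.rpow_add _ _ two_ne_zero ENNReal.ofNat_ne_top, ENNReal.rpow_natCast]
          ring

/-- The constant in the bound for convolution operators on the modulation norm of exponent `b`. -/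
def modulationConst (b : ℝ) : ℝ≥0∞ :=
  (2 ^ b) ^ 2 * (1 - (2 ^ b)⁻¹)⁻¹ + 32

lemma modulationConst_ne_top {b : ℝ} (hb : 0 < b) : modulationConst b ≠ ∞ := by
  have : ((2 : ℝ≥0∞) ^ b)⁻¹ < 1 :=
    ENNReal.inv_lt_one.mpr (ENNReal.one_lt_rpow ENNReal.one_lt_two hb)
  have pow_ne_top : ((2 : ℝ≥0∞) ^ b) ^ 2 ≠ ∞ :=
    ENNReal.pow_ne_top (ENNReal.rpow_ne_top_of_nonneg hb.le ENNReal.ofNat_ne_top)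
  exact ENNReal.add_ne_top.mpr ⟨ENNReal.mul_ne_top pow_ne_top
    (ENNReal.inv_ne_top.mpr (tsub_pos_iff_lt.mpr this).ne'), ENNReal.ofNat_ne_top⟩

lemma RadiallyAntitone.tsum_two_rpow_mul_shellGain_le {κ : ℝ → ℝ≥0∞} (hκ : RadiallyAntitone κ)
    {b : ℝ} (hb : b ≤ 1 / 2) (k : ℕ) :
    ∑' j : ℕ, 2 ^ (j * b) * shellGain κ j k ≤
      modulationConst b * (∫⁻ u, κ u) * 2 ^ (k * b) := by
  have near : ∑' j : ℕ, (if j < k + 3 then ((2 : ℝ≥0∞) ^ b) ^ j else 0) ≤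
      2 ^ (k * b) * ((2 ^ b) ^ 2 * (1 - (2 ^ b)⁻¹)⁻¹) := by
    calc ∑' j : ℕ, (if j < k + 3 then ((2 : ℝ≥0∞) ^ b) ^ j else 0)
        = ∑ j ∈ Finset.range (k + 2 + 1), ((2 : ℝ≥0∞) ^ b) ^ j := by
          rw [tsum_eq_sum (s := Finset.range (k + 3)) fun j hj =>
            if_neg (mt Finset.mem_range.mpr hj)]
          exact Finset.sum_congr rfl fun j hj => if_pos (Finset.mem_range.mp hj)
      _ ≤ (2 ^ b) ^ (k + 2) * (1 - (2 ^ b)⁻¹)⁻¹ :=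
          sum_range_succ_pow_le (ENNReal.rpow_pos two_pos ENNReal.ofNat_ne_top).ne'
            (ENNReal.rpow_ne_top_of_ne_zero two_ne_zero ENNReal.ofNat_ne_top) _
      _ = 2 ^ (k * b) * ((2 ^ b) ^ 2 * (1 - (2 ^ b)⁻¹)⁻¹) := by
          rw [pow_add, mul_comm (k : ℝ), ENNReal.rpow_mul, ENNReal.rpow_natCast, mul_assoc]
  calc ∑' j : ℕ, 2 ^ (j * b) * shellGain κ j k
      ≤ ∑' j : ℕ, ((if j < k + 3 then (2 ^ b) ^ j else 0) * (∫⁻ u, κ u) +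
          4 * 2 ^ (k * b) * (2 ^ j * κ (2 ^ j / 4))) :=
        ENNReal.tsum_le_tsum fun j => two_rpow_mul_shellGain_le hb j k
    _ = (∑' j : ℕ, if j < k + 3 then (2 ^ b) ^ j else 0) * (∫⁻ u, κ u) +
          4 * 2 ^ (k * b) * ∑' j : ℕ, 2 ^ j * κ (2 ^ j / 4) := by
        rw [ENNReal.tsum_add, ENNReal.tsum_mul_right, ENNReal.tsum_mul_left]
    _ ≤ 2 ^ (k * b) * ((2 ^ b) ^ 2 * (1 - (2 ^ b)⁻¹)⁻¹) * (∫⁻ u, κ u) +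
          4 * 2 ^ (k * b) * (8 * ∫⁻ u, κ u) := by
        gcongr
        exact hκ.tsum_two_pow_mul_le
    _ = modulationConst b * (∫⁻ u, κ u) * 2 ^ (k * b) := by
        unfold modulationConst
        ring

/-- Lebesgue measure on the frequency plane `(ξ, λ)`, localized by `c` in the modulation
`λ - ω ξ` and weighted by `w ξ`. -/
def modulationMeasure (c : ℝ → ℝ≥0∞) (ω : ℝ → ℝ) (w : ℝ → ℝ≥0∞) : Measure (ℝ × ℝ) :=
  volume.withDensity fun p => c (p.2 - ω p.1) * w p.1

/-- The `ℝ≥0∞`-valued `X^b`-norm in terms of the Fourier transform `G`, for the dispersion relation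
`ω`, the dyadic cutoffs `c` and the weight `w`, the square of the paper's weight `(1 + |ξ|) ^ s`. -/
def modulationNorm {E : Type*} [ENorm E] (c : ℕ → ℝ → ℝ≥0∞) (ω : ℝ → ℝ) (w : ℝ → ℝ≥0∞) (b : ℝ)
    (G : ℝ × ℝ → E) : ℝ≥0∞ :=
  ∑' j : ℕ, 2 ^ (j * b) * eLpNorm G 2 (modulationMeasure (c j) ω w)

/-- Convolution with `κ` in the second variable. -/
def convSnd (κ : ℝ → ℝ≥0∞) (G : ℝ × ℝ → ℝ≥0∞) (p : ℝ × ℝ) : ℝ≥0∞ :=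
  ∫⁻ m, κ (p.2 - m) * G (p.1, m)

section ModulationNorm

variable {c : ℕ → ℝ → ℝ≥0∞} {ω : ℝ → ℝ} {w κ : ℝ → ℝ≥0∞} {G : ℝ × ℝ → ℝ≥0∞}

lemma modulationNorm_mono {E F : Type*} [ENorm E] [ENorm F] {G : ℝ × ℝ → E} {H : ℝ × ℝ → F}
    (h : ∀ p, ‖G p‖ₑ ≤ ‖H p‖ₑ) (b : ℝ) : modulationNorm c ω w b G ≤ modulationNorm c ω w b H := by
  unfold modulationNorm
  gcongr
  exact eLpNorm_mono_enorm h

lemma measurable_convSnd (hκ : Measurable κ) (hG : Measurable G) : Measurable (convSnd κ G) := by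
  have : Measurable fun q : (ℝ × ℝ) × ℝ => κ (q.1.2 - q.2) * G (q.1.1, q.2) := by fun_prop
  exact this.lintegral_prod_right'

lemma convSnd_dilation {b : ℝ} (hb : b ≠ 0) (κ : ℝ → ℝ≥0∞) (G : ℝ × ℝ → ℝ≥0∞) (p : ℝ × ℝ) :
    convSnd (dilation b κ) G p = ∫⁻ v, κ v * G (p.1, p.2 - b⁻¹ * v) := by
  rw [← ofReal_abs_mul_lintegral_comp_mul_left hb, convSnd,
    ← lintegral_sub_left_eq_self _ p.2, ← lintegral_const_mul' _ _ ENNReal.ofReal_ne_top]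
  simp only [dilation, sub_sub_cancel, inv_mul_cancel_left₀ hb, mul_assoc]

lemma lintegral_modulationMeasure {c : ℝ → ℝ≥0∞} (hc : Measurable c) (hω : Measurable ω)
    (hw : Measurable w) (hG : Measurable G) :
    ∫⁻ p, G p ∂modulationMeasure c ω w =
      ∫⁻ ξ, w ξ * ∫⁻ l, G (ξ, l) ∂shellMeasure c (ω ξ) := by
  rw [modulationMeasure, lintegral_withDensity_eq_lintegral_mul _ (by fun_prop) hG,
    Measure.volume_eq_prod, lintegral_prod _ (by fun_prop)]
  refine lintegral_congr fun ξ => ?_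
  rw [shellMeasure, lintegral_withDensity_eq_lintegral_mul _ (by fun_prop) (by fun_prop),
    ← lintegral_const_mul _ (by fun_prop)]
  exact lintegral_congr fun l => by simp only [Pi.mul_apply]; ring

lemma convSnd_localized (hc : IsDyadicPartition c) (hκ : Measurable κ) (hG : Measurable G)
    (k : ℕ) (p : ℝ × ℝ) :
    convSnd κ (fun q => c k (q.2 - ω q.1) * G q) p =
      ∫⁻ m, κ (p.2 - m) * G (p.1, m) ∂shellMeasure (c k) (ω p.1) := by
  have := hc.measurable k
  rw [shellMeasure, lintegral_withDensity_eq_lintegral_mul _ (by fun_prop) (by fun_prop)]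
  exact lintegral_congr fun m => by simp only [Pi.mul_apply]; ring

lemma convSnd_eq_tsum (hc : IsDyadicPartition c) (hω : Measurable ω) (hκ : Measurable κ)
    (hG : Measurable G) :
    convSnd κ G = fun p => ∑' k, convSnd κ (fun q => c k (q.2 - ω q.1) * G q) p := by
  have := hc.measurable
  funext p
  unfold convSnd
  rw [← lintegral_tsum fun k => by fun_prop]
  refine lintegral_congr fun m => ?_
  rw [ENNReal.tsum_mul_left, ENNReal.tsum_mul_right, hc.tsum_eq_one, one_mul]

lemma eLpNorm_convSnd_localized_le (hc : IsDyadicPartition c) (hω : Measurable ω)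
    (hw : Measurable w) (hκ : RadiallyAntitone κ) (hG : Measurable G) (j k : ℕ) :
    eLpNorm (convSnd κ fun q => c k (q.2 - ω q.1) * G q) 2 (modulationMeasure (c j) ω w) ≤
      shellGain κ j k * eLpNorm G 2 (modulationMeasure (c k) ω w) := by
  have := hc.measurable
  have := measurable_convSnd (G := fun q => c k (q.2 - ω q.1) * G q) hκ.measurable (by fun_prop)
  refine eLpNorm_two_le_mul_of_lintegral_sq_le ?_
  simp only [enorm_eq_self]
  rw [← lintegral_const_mul _ (by fun_prop),
    lintegral_modulationMeasure (hc.measurable k) hω hw (by fun_prop),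
    lintegral_modulationMeasure (hc.measurable j) hω hw (by fun_prop)]
  refine lintegral_mono fun ξ => mul_le_mul_right ?_ _
  simp only [convSnd_localized hc hκ.measurable hG]
  rw [lintegral_const_mul _ (by fun_prop)]
  exact lintegral_sq_conv_shellMeasure_le_shellGain hc hκ (by fun_prop) (ω ξ) j k

lemma modulationNorm_convSnd_le (hc : IsDyadicPartition c) (hω : Measurable ω)
    (hw : Measurable w) (hκ : RadiallyAntitone κ) (hG : Measurable G) {b : ℝ} (hb : b ≤ 1 / 2) :
    modulationNorm c ω w b (convSnd κ G) ≤
      modulationConst b * (∫⁻ u, κ u) * modulationNorm c ω w b G := by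
  have := hc.measurable
  let N (k : ℕ) : ℝ≥0∞ := eLpNorm G 2 (modulationMeasure (c k) ω w)
  have block_le (j : ℕ) :
      eLpNorm (convSnd κ G) 2 (modulationMeasure (c j) ω w) ≤ ∑' k, shellGain κ j k * N k := by
    rw [convSnd_eq_tsum hc hω hκ.measurable hG]
    refine (eLpNorm_tsum_le one_le_two ENNReal.ofNat_ne_top fun k =>
      measurable_convSnd hκ.measurable (by fun_prop)).trans (ENNReal.tsum_le_tsum fun k => ?_)
    exact eLpNorm_convSnd_localized_le hc hω hw hκ hG j k
  calc modulationNorm c ω w b (convSnd κ G)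
      ≤ ∑' j : ℕ, 2 ^ (j * b) * ∑' k, shellGain κ j k * N k := by
        unfold modulationNorm
        gcongr with j
        exact block_le j
    _ = ∑' k, (∑' j : ℕ, 2 ^ (j * b) * shellGain κ j k) * N k := by
        simp only [← ENNReal.tsum_mul_left, ← ENNReal.tsum_mul_right, ← mul_assoc]
        exact ENNReal.tsum_comm
    _ ≤ ∑' k : ℕ, modulationConst b * (∫⁻ u, κ u) * 2 ^ (k * b) * N k := by
        gcongr with k
        exact hκ.tsum_two_rpow_mul_shellGain_le hb k
    _ = modulationConst b * (∫⁻ u, κ u) * modulationNorm c ω w b G := by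
        simp only [modulationNorm, N, ← ENNReal.tsum_mul_left, mul_assoc]

end ModulationNorm

/-! ### The Fourier transform of a product with a function of time -/

lemma measurable_FT2 {f : ℝ × ℝ → ℂ} (hf : Measurable f) :
    Measurable fun p : ℝ × ℝ => FT2 f p.1 p.2 := by
  have : StronglyMeasurable fun q : (ℝ × ℝ) × (ℝ × ℝ) =>
      exp (I * ((q.2.1 * q.1.1 + q.2.2 * q.1.2 : ℝ) : ℂ)) * f q.2 :=
    Measurable.stronglyMeasurable (by fun_prop)
  exact this.integral_prod_right'.measurable

/-- Mathlib's Fourier transform has the kernel `exp (-2πi⟪·, ·⟫)` on inner product spaces, hence the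
detour through `WithLp 2` and the scaling by `-(2π)⁻¹`. -/
lemma exists_schwartzMap_eq_FT2 (f : 𝓢(ℝ × ℝ, ℂ)) :
    ∃ F : 𝓢(ℝ × ℝ, ℂ), ∀ p, F p = FT2 f p.1 p.2 := by
  let e : WithLp 2 (ℝ × ℝ) ≃L[ℝ] ℝ × ℝ := WithLp.prodContinuousLinearEquiv 2 ℝ ℝ ℝ
  let scale : (ℝ × ℝ) ≃L[ℝ] ℝ × ℝ := ContinuousLinearEquiv.smulLeft
    (Units.mk0 (-(2 * Real.pi)⁻¹ : ℝ) (neg_ne_zero.mpr (inv_ne_zero Real.two_pi_pos.ne')))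
  refine ⟨SchwartzMap.compCLMOfContinuousLinearEquiv ℂ (scale.trans e.symm)
    (𝓕 (SchwartzMap.compCLMOfContinuousLinearEquiv ℂ e f)), fun p => ?_⟩
  rw [SchwartzMap.compCLMOfContinuousLinearEquiv_apply, Function.comp_apply,
    SchwartzMap.fourier_coe, Real.fourier_eq', FT2,
    ← (WithLp.volume_preserving_toLp ℝ ℝ).integral_comp
      (MeasurableEquiv.toLp 2 (ℝ × ℝ)).measurableEmbedding]
  refine integral_congr_ae (.of_forall fun q => ?_)
  have e_toLp : e (WithLp.toLp 2 q) = q := rfl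
  have scaled : (scale.trans e.symm) p =
    WithLp.toLp 2 (-(2 * Real.pi)⁻¹ * p.1, -(2 * Real.pi)⁻¹ * p.2) := rfl
  simp only [SchwartzMap.compCLMOfContinuousLinearEquiv_apply, Function.comp_apply, e_toLp, scaled,
    WithLp.prod_inner_apply, RCLike.inner_apply, conj_trivial, smul_eq_mul]
  rw [mul_comm I]
  congr 4
  field_simp
  ring

lemma schwartzMap_eq_integral_fourier (g : 𝓢(ℝ, ℂ)) (t : ℝ) :
    g t = ∫ v : ℝ, exp (I * ((2 * Real.pi * v * t : ℝ) : ℂ)) * 𝓕 g v := by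
  have inversion : 𝓕⁻ (𝓕 g) = g := FourierTransform.fourierInv_fourier_eq g
  conv_lhs => rw [← inversion, SchwartzMap.fourierInv_coe, Real.fourierInv_eq']
  refine integral_congr_ae (.of_forall fun v => ?_)
  simp only [smul_eq_mul, RCLike.inner_apply, conj_trivial]
  rw [mul_comm I, mul_comm t v, ← mul_assoc]

lemma FT2_schwartzMap_mul (g : 𝓢(ℝ, ℂ)) {f : ℝ × ℝ → ℂ} (hf : Integrable f) (r ξ lam : ℝ) :
    FT2 (fun p => g (r * p.2) * f p) ξ lam =
      ∫ v : ℝ, 𝓕 g v * FT2 f ξ (lam + 2 * Real.pi * r * v) := by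
  let phase (p : ℝ × ℝ) (v : ℝ) : ℂ :=
    exp (I * ((p.1 * ξ + p.2 * (lam + 2 * Real.pi * r * v) : ℝ) : ℂ))
  have phase_eq (p : ℝ × ℝ) (v : ℝ) : phase p v = exp (I * ((p.1 * ξ + p.2 * lam : ℝ) : ℂ)) *
      exp (I * ((2 * Real.pi * v * (r * p.2) : ℝ) : ℂ)) := by
    simp only [phase]
    rw [← exp_add]
    congr 1
    push_cast
    ring
  have integrable_uncurry : Integrable
      (Function.uncurry fun (p : ℝ × ℝ) (v : ℝ) => phase p v * (f p * 𝓕 g v))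
      (volume.prod volume) := by
    refine (hf.mul_prod (𝓕 g).integrable).bdd_mul (c := 1)
      (Continuous.aestronglyMeasurable (by fun_prop)) (.of_forall fun z => ?_)
    exact (norm_exp_I_mul_ofReal _).le
  calc FT2 (fun p => g (r * p.2) * f p) ξ lam
      = ∫ p : ℝ × ℝ, ∫ v : ℝ, phase p v * (f p * 𝓕 g v) := by
        refine integral_congr_ae (.of_forall fun p => ?_)
        simp only
        rw [schwartzMap_eq_integral_fourier g, ← integral_mul_const, ← integral_const_mul]
        refine integral_congr_ae (.of_forall fun v => ?_)
        simp only [phase_eq]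
        ring
    _ = ∫ v : ℝ, ∫ p : ℝ × ℝ, phase p v * (f p * 𝓕 g v) := integral_integral_swap integrable_uncurry
    _ = ∫ v : ℝ, 𝓕 g v * FT2 f ξ (lam + 2 * Real.pi * r * v) := by
        refine integral_congr_ae (.of_forall fun v => ?_)
        simp only [FT2]
        rw [← integral_const_mul]
        refine integral_congr_ae (.of_forall fun p => ?_)
        simp only [phase]
        ring

lemma enorm_FT2_schwartzMap_mul_le {g : 𝓢(ℝ, ℂ)} {κ : ℝ → ℝ≥0∞} (hκ : ∀ v, ‖𝓕 g v‖ₑ ≤ κ v)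
    {f : ℝ × ℝ → ℂ} (hf : Integrable f) {r : ℝ} (hr : r ≠ 0) (p : ℝ × ℝ) :
    ‖FT2 (fun q => g (r * q.2) * f q) p.1 p.2‖ₑ ≤
      convSnd (dilation (-(2 * Real.pi * r)⁻¹) κ) (fun q => ‖FT2 f q.1 q.2‖ₑ) p := by
  have : 2 * Real.pi * r ≠ 0 := mul_ne_zero Real.two_pi_pos.ne' hr
  rw [FT2_schwartzMap_mul g hf, convSnd_dilation (neg_ne_zero.mpr (inv_ne_zero this))]
  refine (enorm_integral_le_lintegral_enorm _).trans (lintegral_mono fun v => ?_)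
  rw [enorm_mul, inv_neg, inv_inv, neg_mul, sub_neg_eq_add]
  gcongr
  exact hκ v

/-! ### Schwartz functions have finite modulation norm -/

lemma lintegral_one_add_norm_pow_mul_enorm_sq_ne_top {D E : Type*} [NormedAddCommGroup D]
    [NormedSpace ℝ D] [FiniteDimensional ℝ D] [MeasurableSpace D] [BorelSpace D]
    [NormedAddCommGroup E] [NormedSpace ℝ E] (μ : Measure D) [μ.IsAddHaarMeasure] (F : 𝓢(D, E))
    (n : ℕ) : ∫⁻ x, ENNReal.ofReal (1 + ‖x‖) ^ n * ‖F x‖ₑ ^ 2 ∂μ ≠ ∞ := by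
  set d := Module.finrank ℝ D
  obtain ⟨C, hC⟩ := exists_one_add_norm_pow_mul_norm_le F (n + d + 1)
  have decay : Integrable (fun x : D => C ^ 2 * (1 + ‖x‖) ^ (-(d + 1 : ℕ) : ℝ)) μ :=
    (integrable_one_add_norm (mod_cast d.lt_succ_self)).const_mul _
  refine ne_top_of_le_ne_top decay.lintegral_lt_top.ne (lintegral_mono fun x => ?_)
  have one_le : 1 ≤ 1 + ‖x‖ := le_add_of_nonneg_right (norm_nonneg x)
  have bound : (1 + ‖x‖) ^ n * ‖F x‖ ^ 2 * (1 + ‖x‖) ^ (d + 1) ≤ C ^ 2 :=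
    calc (1 + ‖x‖) ^ n * ‖F x‖ ^ 2 * (1 + ‖x‖) ^ (d + 1)
        = (1 + ‖x‖) ^ (n + d + 1) * ‖F x‖ ^ 2 := by ring
      _ ≤ ((1 + ‖x‖) ^ (n + d + 1)) ^ 2 * ‖F x‖ ^ 2 := by
          gcongr
          exact le_self_pow₀ (one_le_pow₀ one_le) two_ne_zero
      _ ≤ C ^ 2 := by
          rw [← mul_pow]
          gcongr
          exact hC x
  rw [← ofReal_norm, ← ENNReal.ofReal_pow (by positivity), ← ENNReal.ofReal_pow (by positivity),
    ← ENNReal.ofReal_mul (by positivity), Real.rpow_neg (by positivity), Real.rpow_natCast,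
    ← div_eq_mul_inv]
  exact ENNReal.ofReal_le_ofReal ((le_div_iff₀ (by positivity)).mpr bound)

section Finiteness

variable {c : ℕ → ℝ → ℝ≥0∞} {ω : ℝ → ℝ} {w : ℝ → ℝ≥0∞} {M N : ℕ}

lemma IsDyadicPartition.two_pow_le (hc : IsDyadicPartition c) {j : ℕ} {z : ℝ} (hz : c j z ≠ 0) :
    2 ^ j ≤ max 1 (2 * |z|) := by
  rcases j.eq_zero_or_pos with rfl | hj
  · simp
  · exact le_max_of_le_right (by linarith [hc.le_abs hj hz])

lemma two_pow_le_of_cutoff_ne_zero (hc : IsDyadicPartition c)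
    (hω : ∀ ξ, |ω ξ| ≤ (1 + |ξ|) ^ N) {j : ℕ} {p : ℝ × ℝ} (hp : c j (p.2 - ω p.1) ≠ 0) :
    2 ^ j ≤ 4 * (1 + ‖p‖) ^ (N + 1) := by
  have one_le : 1 ≤ 1 + ‖p‖ := le_add_of_nonneg_right (norm_nonneg p)
  have snd_le : |p.2| ≤ (1 + ‖p‖) ^ (N + 1) :=
    calc |p.2| ≤ 1 + ‖p‖ := (norm_snd_le p).trans (le_add_of_nonneg_left zero_le_one)
      _ ≤ (1 + ‖p‖) ^ (N + 1) := le_self_pow₀ one_le N.succ_ne_zero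
  have ω_le : |ω p.1| ≤ (1 + ‖p‖) ^ (N + 1) :=
    calc |ω p.1| ≤ (1 + |p.1|) ^ N := hω p.1
      _ ≤ (1 + ‖p‖) ^ N := by
          gcongr
          exact norm_fst_le p
      _ ≤ (1 + ‖p‖) ^ (N + 1) := pow_le_pow_right₀ one_le N.le_succ
  refine (hc.two_pow_le hp).trans (max_le ?_ ?_)
  · linarith [one_le_pow₀ one_le (n := N + 1)]
  · linarith [abs_sub p.2 (ω p.1)]

lemma lintegral_sq_modulationMeasure_le {E : Type*} [NormedAddCommGroup E]
    (hc : IsDyadicPartition c) (hωm : Measurable ω) (hw : Measurable w)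
    (hω : ∀ ξ, |ω ξ| ≤ (1 + |ξ|) ^ N) (hwM : ∀ ξ, w ξ ≤ ENNReal.ofReal (1 + |ξ|) ^ M)
    {F : ℝ × ℝ → E} (hF : Continuous F) (B j : ℕ) :
    ∫⁻ p, ‖F p‖ₑ ^ 2 ∂modulationMeasure (c j) ω w ≤ ((2 ^ j)⁻¹ ^ B) ^ 2 * (4 ^ (2 * B) *
      ∫⁻ p, ENNReal.ofReal (1 + ‖p‖) ^ (2 * B * (N + 1) + M) * ‖F p‖ₑ ^ 2) := by
  have := hc.measurable j
  have := hF.enorm.measurable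
  rw [modulationMeasure, lintegral_withDensity_eq_lintegral_mul _ (by fun_prop) (by fun_prop),
    ← lintegral_const_mul' _ _ (by finiteness), ← lintegral_const_mul' _ _ (by finiteness)]
  refine lintegral_mono fun p => ?_
  simp only [Pi.mul_apply]
  by_cases hp : c j (p.2 - ω p.1) = 0
  · simp [hp]
  set W := ENNReal.ofReal (1 + ‖p‖)
  have one_le_gain : 1 ≤ (2 ^ j)⁻¹ * (4 * W ^ (N + 1)) := by
    have := ENNReal.ofReal_le_ofReal (two_pow_le_of_cutoff_ne_zero hc hω hp)
    rw [ENNReal.ofReal_mul (by norm_num), ENNReal.ofReal_pow (by norm_num),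
      ENNReal.ofReal_pow (by positivity), ENNReal.ofReal_ofNat, ENNReal.ofReal_ofNat] at this
    rwa [mul_comm, ← div_eq_mul_inv, ENNReal.le_div_iff_mul_le (by simp) (by simp), one_mul]
  have w_le : w p.1 ≤ W ^ M :=
    (hwM p.1).trans (pow_le_pow_left' (ENNReal.ofReal_le_ofReal (by gcongr; exact norm_fst_le p)) M)
  calc c j (p.2 - ω p.1) * w p.1 * ‖F p‖ₑ ^ 2
      ≤ 1 * W ^ M * ‖F p‖ₑ ^ 2 := by
        gcongr
        exact hc.le_one _ _
    _ ≤ ((2 ^ j)⁻¹ * (4 * W ^ (N + 1))) ^ (2 * B) * W ^ M * ‖F p‖ₑ ^ 2 := by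
        gcongr
        exact one_le_pow₀ one_le_gain
    _ = ((2 ^ j)⁻¹ ^ B) ^ 2 * (4 ^ (2 * B) * (W ^ (2 * B * (N + 1) + M) * ‖F p‖ₑ ^ 2)) := by
        ring

lemma modulationNorm_schwartzMap_ne_top {E : Type*} [NormedAddCommGroup E] [NormedSpace ℝ E]
    (hc : IsDyadicPartition c) (hωm : Measurable ω) (hw : Measurable w)
    (hω : ∀ ξ, |ω ξ| ≤ (1 + |ξ|) ^ N) (hwM : ∀ ξ, w ξ ≤ ENNReal.ofReal (1 + |ξ|) ^ M) (b : ℝ)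
    (F : 𝓢(ℝ × ℝ, E)) : modulationNorm c ω w b F ≠ ∞ := by
  obtain ⟨B, hB⟩ := exists_nat_gt b
  set S := 4 ^ (2 * B) *
    ∫⁻ p, ENNReal.ofReal (1 + ‖p‖) ^ (2 * B * (N + 1) + M) * ‖F p‖ₑ ^ 2
  have S_ne_top : S ≠ ∞ := ENNReal.mul_ne_top (by finiteness)
    (lintegral_one_add_norm_pow_mul_enorm_sq_ne_top volume F _)
  have block_le (j : ℕ) :
      eLpNorm F 2 (modulationMeasure (c j) ω w) ≤ (2 ^ j)⁻¹ ^ B * S ^ (1 / 2 : ℝ) := by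
    rw [eLpNorm_two_eq_rpow_lintegral, ← rpow_half_sq ((2 ^ j)⁻¹ ^ B),
      ← ENNReal.mul_rpow_of_nonneg _ _ (by norm_num)]
    gcongr
    exact lintegral_sq_modulationMeasure_le hc hωm hw hω hwM F.continuous B j
  have ratio_lt_one : (2 : ℝ≥0∞) ^ (b - B) < 1 :=
    ENNReal.rpow_lt_one_of_one_lt_of_neg ENNReal.one_lt_two (sub_neg.mpr hB)
  have geometric (j : ℕ) : (2 : ℝ≥0∞) ^ (j * b) * (2 ^ j)⁻¹ ^ B = (2 ^ (b - B)) ^ j := by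
    rw [← ENNReal.rpow_natCast (2 ^ (b - B)), ← ENNReal.rpow_mul, ← ENNReal.rpow_natCast _ B,
      ← ENNReal.rpow_natCast 2 j, ← ENNReal.rpow_neg, ← ENNReal.rpow_mul,
      ← ENNReal.rpow_add _ _ two_ne_zero ENNReal.ofNat_ne_top]
    congr 1
    ring
  have norm_le : modulationNorm c ω w b F ≤
      (∑' j : ℕ, ((2 : ℝ≥0∞) ^ (b - B)) ^ j) * S ^ (1 / 2 : ℝ) := by
    rw [← ENNReal.tsum_mul_right]
    refine ENNReal.tsum_le_tsum fun j => ?_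
    rw [← geometric, mul_assoc]
    gcongr
    exact block_le j
  refine ne_top_of_le_ne_top (ENNReal.mul_ne_top ?_ (by finiteness)) norm_le
  rw [ENNReal.tsum_geometric]
  exact ENNReal.inv_ne_top.mpr (tsub_pos_iff_lt.mpr ratio_lt_one).ne'

end Finiteness

/-! ### The norm `X^b_s` -/

lemma measurable_disp (a : ℝ) : Measurable (disp a) := by
  unfold disp
  fun_prop

lemma abs_disp_le {a : ℝ} (ha : -1 ≤ a) (ξ : ℝ) : |disp a ξ| ≤ (1 + |ξ|) ^ ⌈2 + a⌉₊ := by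
  calc |disp a ξ| = |ξ| * |ξ| ^ (1 + a) := by
        rw [disp, abs_mul, abs_of_nonneg (a := |ξ| ^ (1 + a)) (by positivity)]
    _ ≤ (1 + |ξ|) * (1 + |ξ|) ^ (1 + a) := by
        gcongr
        · linarith
        · linarith
        · linarith
    _ = (1 + |ξ|) ^ (2 + a) := by
        rw [← Real.rpow_one_add' (by positivity) (by linarith)]
        congr 1
        ring
    _ ≤ (1 + |ξ|) ^ (⌈2 + a⌉₊ : ℝ) := by
        gcongr
        · linarith [abs_nonneg ξ]
        · exact Nat.le_ceil _
    _ = (1 + |ξ|) ^ ⌈2 + a⌉₊ := Real.rpow_natCast _ _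

/-- The frequency weight of `X^b_s`, squared because it is integrated against `|f̂| ^ 2`. -/
def sobolevWeight (s ξ : ℝ) : ℝ≥0∞ :=
  ENNReal.ofReal ((1 + |ξ|) ^ (2 * s))

lemma measurable_sobolevWeight (s : ℝ) : Measurable (sobolevWeight s) := by
  unfold sobolevWeight
  fun_prop

lemma sobolevWeight_le (s ξ : ℝ) : sobolevWeight s ξ ≤ ENNReal.ofReal (1 + |ξ|) ^ ⌈2 * s⌉₊ := by
  rw [← ENNReal.ofReal_pow (by positivity), ← Real.rpow_natCast]
  exact ENNReal.ofReal_le_ofReal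
    (Real.rpow_le_rpow_of_exponent_le (by linarith [abs_nonneg ξ]) (Nat.le_ceil _))

namespace DyadicCutoffs

variable {χ₀ χ : ℝ → ℝ}

lemma chiJ_nonneg (hχ : DyadicCutoffs χ₀ χ) (j : ℕ) (z : ℝ) : 0 ≤ chiJ χ₀ χ j z := by
  unfold chiJ
  split_ifs
  exacts [(hχ.mem0 _).1, (hχ.mem1 _).1]

lemma measurable_chiJ (hχ : DyadicCutoffs χ₀ χ) (j : ℕ) : Measurable (chiJ χ₀ χ j) := by
  have := hχ.smooth0.continuous.measurable
  have := hχ.smooth1.continuous.measurable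
  unfold chiJ
  split_ifs <;> fun_prop

lemma abs_le_of_chiJ_ne_zero (hχ : DyadicCutoffs χ₀ χ) {j : ℕ} {z : ℝ} (hz : chiJ χ₀ χ j z ≠ 0) :
    |z| ≤ 2 ^ (j + 1) := by
  rcases eq_or_ne j 0 with rfl | hj
  · contrapose! hz
    simpa [chiJ] using hχ.supp0 z (by simpa using hz)
  · rw [chiJ, if_neg hj] at hz
    have := (hχ.supp1 _ hz).2
    rw [abs_mul, abs_of_pos (by positivity), Real.rpow_neg two_pos.le, Real.rpow_natCast,
      inv_mul_lt_iff₀ (by positivity)] at this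
    exact this.le.trans_eq (pow_succ _ _).symm

lemma le_abs_of_chiJ_ne_zero (hχ : DyadicCutoffs χ₀ χ) {j : ℕ} (hj : 1 ≤ j) {z : ℝ}
    (hz : chiJ χ₀ χ j z ≠ 0) : 2 ^ j / 2 ≤ |z| := by
  rw [chiJ, if_neg (by lia)] at hz
  have := (hχ.supp1 _ hz).1
  rw [abs_mul, abs_of_pos (by positivity), Real.rpow_neg two_pos.le, Real.rpow_natCast,
    lt_inv_mul_iff₀ (by positivity)] at this
  linarith

lemma isDyadicPartition (hχ : DyadicCutoffs χ₀ χ) :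
    IsDyadicPartition fun j z => ENNReal.ofReal (chiJ χ₀ χ j z) where
  measurable j := (hχ.measurable_chiJ j).ennreal_ofReal
  abs_le hz := hχ.abs_le_of_chiJ_ne_zero fun h => hz (by rw [h, ENNReal.ofReal_zero])
  le_abs hj hz := hχ.le_abs_of_chiJ_ne_zero hj fun h => hz (by rw [h, ENNReal.ofReal_zero])
  tsum_eq_one z := by
    have summable : Summable fun j => chiJ χ₀ χ j z := by
      by_contra h
      exact zero_ne_one ((tsum_eq_zero_of_not_summable h).symm.trans (hχ.partition z))
    rw [← ENNReal.ofReal_tsum_of_nonneg (fun j => hχ.chiJ_nonneg j z) summable, hχ.partition,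
      ENNReal.ofReal_one]

end DyadicCutoffs

/-- The `ℝ≥0∞`-valued version of `Xnorm`. Being free of junk values, it can be estimated without
first checking that integrals and series converge. -/
def eXnorm (a : ℝ) (χ₀ χ : ℝ → ℝ) (b s : ℝ) (f : ℝ × ℝ → ℂ) : ℝ≥0∞ :=
  modulationNorm (fun j z => ENNReal.ofReal (chiJ χ₀ χ j z)) (disp a) (sobolevWeight s) b
    fun p => FT2 f p.1 p.2

section XNorm

variable {χ₀ χ : ℝ → ℝ}

lemma Xnorm_nonneg (hχ : DyadicCutoffs χ₀ χ) (a b s : ℝ) (f : ℝ × ℝ → ℂ) :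
    0 ≤ Xnorm a χ₀ χ b s f := by
  refine tsum_nonneg fun j =>
    mul_nonneg (by positivity) (Real.rpow_nonneg (integral_nonneg fun p => ?_) _)
  have := hχ.chiJ_nonneg j (p.2 - disp a p.1)
  positivity

lemma integral_chiJ_eq_toReal (hχ : DyadicCutoffs χ₀ χ) (a s : ℝ) {f : ℝ × ℝ → ℂ}
    (hf : Measurable f) (j : ℕ) :
    ∫ p : ℝ × ℝ, chiJ χ₀ χ j (p.2 - disp a p.1) * (1 + |p.1|) ^ (2 * s) * ‖FT2 f p.1 p.2‖ ^ 2 =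
      (∫⁻ p, ‖FT2 f p.1 p.2‖ₑ ^ 2 ∂modulationMeasure (fun z => ENNReal.ofReal (chiJ χ₀ χ j z))
        (disp a) (sobolevWeight s)).toReal := by
  have := hχ.measurable_chiJ j
  have := measurable_disp a
  have := measurable_sobolevWeight s
  have := measurable_FT2 hf
  have chiJ_nonneg (p : ℝ × ℝ) := hχ.chiJ_nonneg j (p.2 - disp a p.1)
  rw [integral_eq_lintegral_of_nonneg_ae
      (.of_forall fun p => by have := chiJ_nonneg p; simp only [Pi.zero_apply]; positivity)
      (Measurable.aestronglyMeasurable (by fun_prop)),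
    modulationMeasure, lintegral_withDensity_eq_lintegral_mul _ (by fun_prop) (by fun_prop)]
  congr 1
  refine lintegral_congr fun p => ?_
  rw [ENNReal.ofReal_mul (mul_nonneg (chiJ_nonneg p) (by positivity)),
    ENNReal.ofReal_mul (chiJ_nonneg p), ENNReal.ofReal_pow (norm_nonneg _), ofReal_norm]
  rfl

lemma Xnorm_eq_toReal_eXnorm (hχ : DyadicCutoffs χ₀ χ) {a b s : ℝ} {f : ℝ × ℝ → ℂ}
    (hf : Measurable f) (h : eXnorm a χ₀ χ b s f ≠ ∞) :
    Xnorm a χ₀ χ b s f = (eXnorm a χ₀ χ b s f).toReal := by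
  rw [Xnorm, eXnorm, modulationNorm, ENNReal.tsum_toReal_eq (ENNReal.ne_top_of_tsum_ne_top h)]
  refine tsum_congr fun j => ?_
  rw [integral_chiJ_eq_toReal hχ a s hf, eLpNorm_two_eq_rpow_lintegral, ENNReal.toReal_mul,
    ← ENNReal.toReal_rpow, ← ENNReal.toReal_rpow, ENNReal.toReal_ofNat]

lemma eXnorm_schwartzMap_ne_top (hχ : DyadicCutoffs χ₀ χ) {a : ℝ} (ha : -1 ≤ a) (b s : ℝ)
    (f : 𝓢(ℝ × ℝ, ℂ)) : eXnorm a χ₀ χ b s f ≠ ∞ := by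
  obtain ⟨F, hF⟩ := exists_schwartzMap_eq_FT2 f
  rw [eXnorm, ← funext hF]
  exact modulationNorm_schwartzMap_ne_top hχ.isDyadicPartition (measurable_disp a)
    (measurable_sobolevWeight s) (abs_disp_le ha) (sobolevWeight_le s) b F

lemma exists_eXnorm_schwartzMap_mul_le (hχ : DyadicCutoffs χ₀ χ) (a : ℝ) {b : ℝ}
    (hb : b ∈ Set.Ioc 0 (1 / 2)) (s : ℝ) (g : 𝓢(ℝ, ℂ)) :
    ∃ C ≠ ∞, ∀ r ≠ 0, ∀ f : ℝ × ℝ → ℂ, Measurable f → Integrable f →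
      eXnorm a χ₀ χ b s (fun p => g (r * p.2) * f p) ≤ C * eXnorm a χ₀ χ b s f := by
  obtain ⟨κ, hκ, integral_ne_top, majorant⟩ := exists_radiallyAntitone_majorant (𝓕 g)
  refine ⟨modulationConst b * ∫⁻ u, κ u,
    ENNReal.mul_ne_top (modulationConst_ne_top hb.1) integral_ne_top, fun r hr f hf hfi => ?_⟩
  have scale_ne_zero : -(2 * Real.pi * r)⁻¹ ≠ 0 :=
    neg_ne_zero.mpr (inv_ne_zero (mul_ne_zero Real.two_pi_pos.ne' hr))
  calc eXnorm a χ₀ χ b s (fun p => g (r * p.2) * f p)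
      ≤ modulationNorm _ (disp a) (sobolevWeight s) b
          (convSnd (dilation (-(2 * Real.pi * r)⁻¹) κ) fun p => ‖FT2 f p.1 p.2‖ₑ) :=
        modulationNorm_mono (fun p => enorm_FT2_schwartzMap_mul_le majorant hfi hr p) b
    _ ≤ modulationConst b * (∫⁻ u, dilation (-(2 * Real.pi * r)⁻¹) κ u) *
          modulationNorm _ (disp a) (sobolevWeight s) b fun p => ‖FT2 f p.1 p.2‖ₑ :=
        modulationNorm_convSnd_le hχ.isDyadicPartition (measurable_disp a)
          (measurable_sobolevWeight s) (hκ.dilation _) (measurable_FT2 hf).enorm hb.2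
    _ ≤ modulationConst b * (∫⁻ u, κ u) * eXnorm a χ₀ χ b s f := by
        rw [lintegral_dilation scale_ne_zero]
        gcongr
        exact modulationNorm_mono (fun p => (enorm_eq_self _).le) b

end XNorm

lemma TimeCutoff.exists_schwartzMap {ψ : ℝ → ℝ} (hψ : TimeCutoff ψ) :
    ∃ g : 𝓢(ℝ, ℂ), ∀ t, g t = ψ t := by
  have compact_support : HasCompactSupport fun t => (ψ t : ℂ) :=
    .of_support_subset_isCompact (isCompact_Icc (a := -1) (b := 1)) fun t ht =>
      abs_le.mp (hψ.supp t (ofReal_ne_zero.mp ht))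
  have smooth : ContDiff ℝ (⊤ : ℕ∞) fun t => (ψ t : ℂ) := ofRealCLM.contDiff.comp hψ.smooth
  exact ⟨compact_support.toSchwartzMap smooth, fun t => rfl⟩

theorem statement14_general {a : ℝ} (ha : -1 ≤ a) {b : ℝ} (hb : b ∈ Set.Ioc 0 (1 / 2)) (s : ℝ)
    {χ₀ χ : ℝ → ℝ} (hχ : DyadicCutoffs χ₀ χ) (g : 𝓢(ℝ, ℂ)) :
    ∃ C > 0, ∀ δ ≠ 0, ∀ f : 𝓢(ℝ × ℝ, ℂ),
      Xnorm a χ₀ χ b s (fun p => g (p.2 / δ) * f p) ≤ C * Xnorm a χ₀ χ b s f := by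
  obtain ⟨K, K_ne_top, hK⟩ := exists_eXnorm_schwartzMap_mul_le hχ a hb s g
  refine ⟨K.toReal + 1, by positivity, fun δ hδ f => ?_⟩
  have f_finite := eXnorm_schwartzMap_ne_top hχ ha b s f
  have f_measurable := f.continuous.measurable
  have product_le := hK δ⁻¹ (inv_ne_zero hδ) f f_measurable f.integrable
  simp only [← div_eq_inv_mul] at product_le
  rw [Xnorm_eq_toReal_eXnorm hχ f_measurable f_finite, Xnorm_eq_toReal_eXnorm hχ
    (by have := g.continuous.measurable; fun_prop)
    (ne_top_of_le_ne_top (ENNReal.mul_ne_top K_ne_top f_finite) product_le)]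
  calc (eXnorm a χ₀ χ b s fun p => g (p.2 / δ) * f p).toReal
      ≤ (K * eXnorm a χ₀ χ b s f).toReal :=
        ENNReal.toReal_mono (ENNReal.mul_ne_top K_ne_top f_finite) product_le
    _ = K.toReal * (eXnorm a χ₀ χ b s f).toReal := ENNReal.toReal_mul
    _ ≤ (K.toReal + 1) * (eXnorm a χ₀ χ b s f).toReal := by
        gcongr
        linarith

theorem statement14 (a : ℝ) (ha : a ∈ Set.Ioo (0 : ℝ) 1) (s : ℝ)
    (χ₀ χ : ℝ → ℝ) (hχ : DyadicCutoffs χ₀ χ)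
    (ψ : ℝ → ℝ) (hψ : TimeCutoff ψ) :
    ∀ ε > (0 : ℝ), ∃ C > 0, ∀ δ ∈ Set.Ioo (0 : ℝ) 1, ∀ f : SchwartzMap (ℝ × ℝ) ℂ,
      Xnorm a χ₀ χ (1 / 2) s (fun p : ℝ × ℝ => (ψ (p.2 / δ) : ℂ) * f p) ≤
        C * δ ^ (-ε) * Xnorm a χ₀ χ (1 / 2) s (fun p => f p) := by
  intro ε hε
  obtain ⟨g, hg⟩ := hψ.exists_schwartzMap
  obtain ⟨C, C_pos, hC⟩ :=
    statement14_general (a := a) (by linarith [ha.1]) ⟨one_half_pos, le_rfl⟩ s hχ g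
  refine ⟨C, C_pos, fun δ hδ f => ?_⟩
  have one_le : 1 ≤ δ ^ (-ε) :=
    Real.one_le_rpow_of_pos_of_le_one_of_nonpos hδ.1 hδ.2.le (neg_nonpos.mpr hε.le)
  simpa only [hg] using (hC δ hδ.1.ne' f).trans
    (mul_le_mul_of_nonneg_right (le_mul_of_one_le_right C_pos.le one_le) (Xnorm_nonneg hχ ..))
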